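/- Let A be an infinite subset of the prime numbers whose natural density in the primes exists and equals θ ∈ (0,1], let p_{1;A} < p_{2;A} < ⋯ be the enumeration of A in increasing order, and for M ∈ ℕ with M ≥ p_{1;A} let N⁺(M) = max{n : p_{n;A} ≤ M}. Then H_M := ∑_{n with p_{N⁺(M);A} < n ≤ M, every prime factor of n lies in A} 1/n satisfies H_M ≤ log( p_{N⁺(M)+1;A} / p_{N⁺(M);A} ), and H_M → 0 as M → ∞. -/

import Mathlib

open Filter
open scoped Classical

namespace PrimeGaps

/-- The Dirichlet series with coefficients `Λ n - 1` extends continuously to `1 ≤ re s`. -/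
theorem exists_continuousOn_hasSum_vonMangoldt_sub_one :
    ∃ F : ℂ → ℂ, ContinuousOn F {s | 1 ≤ s.re} ∧ ∀ s : ℂ, 1 < s.re →
      HasSum (fun n : ℕ ↦ ((ArithmeticFunction.vonMangoldt n : ℂ) - 1) * (n : ℂ) ^ (-s)) (F s) := by
  set Z : ℂ → ℂ := DirichletCharacter.LFunctionTrivChar₁ 1 with hZ
  have hZ1 : Z 1 = 1 := by simp [hZ]
  have hd : Differentiable ℂ Z := DirichletCharacter.differentiable_LFunctionTrivChar₁ 1
  have hmod : DirichletCharacter.LFunctionTrivChar 1 = riemannZeta :=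
    DirichletCharacter.LFunction_modOne_eq
  refine ⟨fun s ↦ -deriv Z s / Z s - dslope Z 1 s, ?_, ?_⟩
  · refine ContinuousOn.sub ?_ ?_
    · refine (DirichletCharacter.continuousOn_neg_logDeriv_LFunctionTrivChar₁ 1).mono ?_
      intro s hs
      right
      rw [hmod]
      exact riemannZeta_ne_zero_of_one_le_re hs
    · refine ContinuousOn.mono ?_ (Set.subset_univ _)
      exact (continuousOn_dslope (Filter.univ_mem)).2 ⟨hd.continuous.continuousOn, hd 1⟩
  · intro s hs
    have hs1 : s ≠ 1 := by rintro rfl; simp at hs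
    have hs0 : s ≠ 0 := by rintro rfl; norm_num at hs
    have hs1' : s - 1 ≠ 0 := sub_ne_zero.2 hs1
    have hz := riemannZeta_ne_zero_of_one_le_re hs.le
    have h1 := (ArithmeticFunction.LSeriesSummable_vonMangoldt hs).hasSum
    have h2 := ((LSeriesSummable_one_iff (s := s)).2 hs).hasSum
    have e1 : ∑' n, LSeries.term (fun n ↦ (ArithmeticFunction.vonMangoldt n : ℂ)) s n
        = - deriv riemannZeta s / riemannZeta s :=
      ArithmeticFunction.LSeries_vonMangoldt_eq_deriv_riemannZeta_div hs
    have e2 : ∑' n, LSeries.term 1 s n = riemannZeta s := LSeries_one_eq_riemannZeta hs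
    rw [e1] at h1
    rw [e2] at h2
    convert! h1.sub h2 using 1
    · ext n
      rcases eq_or_ne n 0 with rfl | hn
      · simp [hs0]
      · simp [LSeries.term_of_ne_zero hn, Complex.cpow_neg]
        ring
    · have hZs : Z s = (s - 1) * riemannZeta s := by
        simp [hZ, Function.update_of_ne hs1]
      have hdZ : deriv Z s = (s - 1) * deriv riemannZeta s + riemannZeta s := by
        rw [hZ, DirichletCharacter.deriv_LFunctionTrivChar₁_apply_of_ne_one _ hs1, hmod]
      change -deriv Z s / Z s - dslope Z 1 s = _
      rw [dslope_of_ne _ hs1, slope_def_field, hdZ, hZs, hZ1]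
      field_simp
      ring

/-- The Fejér-type kernel with Fourier transform supported on `[-T, T]`. -/
noncomputable def fejer (T v : ℝ) : ℝ := ∫ t in (0 : ℝ)..T, (1 - t / T) * Real.cos (t * v)

theorem fejer_eq {T v : ℝ} (hT : 0 < T) (hv : v ≠ 0) :
    fejer T v = (1 - Real.cos (T * v)) / (T * v ^ 2) := by
  have key : ∀ t ∈ Set.uIcc 0 T, HasDerivAt
      (fun t ↦ (1 - t / T) * (Real.sin (t * v) / v) - Real.cos (t * v) / (T * v ^ 2))
      ((1 - t / T) * Real.cos (t * v)) t := by
    intro t _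
    have h0 : HasDerivAt (fun t : ℝ ↦ t * v) v t := by simpa using (hasDerivAt_id t).mul_const v
    have h1 : HasDerivAt (fun t : ℝ ↦ 1 - t / T) (-(1 / T)) t := by
      simpa using ((hasDerivAt_id t).div_const T).const_sub 1
    have := (h1.mul (h0.sin.div_const v)).sub (h0.cos.div_const (T * v ^ 2))
    convert! this using 1
    field_simp
    ring
  rw [fejer, intervalIntegral.integral_eq_sub_of_hasDerivAt key]
  · field_simp
    simp
    ring
  · apply Continuous.intervalIntegrable
    fun_prop

theorem fejer_nonneg {T : ℝ} (hT : 0 < T) (v : ℝ) : 0 ≤ fejer T v := by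
  rcases eq_or_ne v 0 with rfl | hv
  · refine intervalIntegral.integral_nonneg hT.le fun t ht ↦ ?_
    have : t / T ≤ 1 := (div_le_one hT).2 ht.2
    simpa using this
  · rw [fejer_eq hT hv]
    have := Real.cos_le_one (T * v)
    have : 0 ≤ 1 - Real.cos (T * v) := by linarith
    positivity

theorem fejer_le {T v : ℝ} (hT : 0 < T) (hv : v ≠ 0) : fejer T v ≤ 2 / (T * v ^ 2) := by
  rw [fejer_eq hT hv]
  have := Real.neg_one_le_cos (T * v)
  gcongr
  linarith

theorem integral_one_sub_div {T : ℝ} (hT : 0 < T) : ∫ t in (0 : ℝ)..T, (1 - t / T) = T / 2 := by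
  rw [intervalIntegral.integral_sub (by simp) (by apply Continuous.intervalIntegrable; fun_prop),
    intervalIntegral.integral_div]
  simp
  field_simp
  ring

theorem fejer_le_self {T : ℝ} (hT : 0 < T) (v : ℝ) : fejer T v ≤ T := by
  calc fejer T v ≤ ∫ t in (0 : ℝ)..T, (1 - t / T) := by
        refine intervalIntegral.integral_mono_on hT.le ?_ ?_ fun t ht ↦ ?_
        · apply Continuous.intervalIntegrable
          fun_prop
        · apply Continuous.intervalIntegrable
          fun_prop
        · have : t / T ≤ 1 := (div_le_one hT).2 ht.2
          exact mul_le_of_le_one_right (by linarith) (Real.cos_le_one _)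
    _ = T / 2 := integral_one_sub_div hT
    _ ≤ T := by linarith

theorem le_fejer {T v : ℝ} (hT : 0 < T) (hv : |v| ≤ 1 / T) : T / 4 ≤ fejer T v := by
  calc T / 4 = ∫ t in (0 : ℝ)..T, (1 - t / T) * (1 / 2) := by
        rw [intervalIntegral.integral_mul_const, integral_one_sub_div hT]; ring
    _ ≤ fejer T v := by
        refine intervalIntegral.integral_mono_on hT.le ?_ ?_ fun t ht ↦ ?_
        · apply Continuous.intervalIntegrable
          fun_prop
        · apply Continuous.intervalIntegrable
          fun_prop
        · have h1 : t / T ≤ 1 := (div_le_one hT).2 ht.2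
          refine mul_le_mul_of_nonneg_left ?_ (by linarith)
          have h2 : |t * v| ≤ 1 := by
            rw [abs_mul, abs_of_nonneg ht.1]
            calc t * |v| ≤ T * (1 / T) := by gcongr; exact ht.2
              _ = 1 := by field_simp
          have h3 := Real.one_sub_sq_div_two_le_cos (x := t * v)
          have h4 : (t * v) ^ 2 ≤ 1 := by rw [← sq_abs]; exact pow_le_one₀ (abs_nonneg _) h2
          linarith

theorem hasSum_mul_fejer {F : ℂ → ℂ} {T σ : ℝ} (hT : 0 < T) (hσ : 1 < σ)
    (hF : ∀ s : ℂ, 1 < s.re →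
      HasSum (fun n : ℕ ↦ ((ArithmeticFunction.vonMangoldt n : ℂ) - 1) * (n : ℂ) ^ (-s)) (F s))
    (u : ℝ) :
    HasSum (fun n : ℕ ↦ (ArithmeticFunction.vonMangoldt n - 1) * (n : ℝ) ^ (-σ) *
        fejer T (u - Real.log n))
      (∫ t in (0 : ℝ)..T, ((1 - t / T : ℝ) : ℂ) * Complex.exp (t * u * Complex.I) *
        F (σ + t * Complex.I)).re := by
  have hre : ∀ t : ℝ, ((σ : ℂ) + t * Complex.I).re = σ := by simp
  set f : ℕ → ℝ → ℂ := fun n t ↦ ((1 - t / T : ℝ) : ℂ) * Complex.exp (t * u * Complex.I) *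
    (((ArithmeticFunction.vonMangoldt n : ℂ) - 1) * (n : ℂ) ^ (-((σ : ℂ) + t * Complex.I))) with hf
  have hexp : ∀ n t, f n t = (((ArithmeticFunction.vonMangoldt n - 1) * (n : ℝ) ^ (-σ) : ℝ) : ℂ) *
      (((1 - t / T : ℝ) : ℂ) * Complex.exp ((t * (u - Real.log n) : ℝ) * Complex.I)) := by
    intro n t
    rcases eq_or_ne n 0 with rfl | hn
    · have h0 : -((σ : ℂ) + t * Complex.I) ≠ 0 := by
        intro h
        have := congrArg Complex.re h
        simp at this
        linarith
      simp only [hf]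
      rw [Nat.cast_zero, Complex.zero_cpow h0]
      simp [Real.zero_rpow (by linarith : -σ ≠ 0)]
    · have hn' : (n : ℂ) ≠ 0 := by exact_mod_cast hn
      have h1 : ((((n : ℝ) ^ (-σ) : ℝ)) : ℂ) = Complex.exp (-(σ * Real.log n)) := by
        rw [Real.rpow_def_of_pos (by positivity)]
        push_cast
        ring_nf
      simp only [hf]
      rw [Complex.ofReal_mul, h1, Complex.cpow_def_of_ne_zero hn', Complex.natCast_log.symm]
      have : Complex.exp ((t * (u - Real.log n) : ℝ) * Complex.I) =
        Complex.exp (t * u * Complex.I) * Complex.exp (-(t * Real.log n * Complex.I)) := by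
        rw [← Complex.exp_add]; push_cast; ring_nf
      rw [this]
      have : Complex.exp (Real.log n * -((σ : ℂ) + t * Complex.I)) =
        Complex.exp (-(σ * Real.log n)) * Complex.exp (-(t * Real.log n * Complex.I)) := by
        rw [← Complex.exp_add]; ring_nf
      rw [this]
      push_cast
      ring
  have hcont : ∀ n, Continuous (f n) := by
    intro n
    rw [funext (hexp n)]
    fun_prop
  have hsum : HasSum (fun n ↦ ∫ t in (0 : ℝ)..T, f n t)
      (∫ t in (0 : ℝ)..T, ((1 - t / T : ℝ) : ℂ) * Complex.exp (t * u * Complex.I) *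
        F (σ + t * Complex.I)) := by
    refine intervalIntegral.hasSum_integral_of_dominated_convergence
      (fun n _ ↦ ‖((ArithmeticFunction.vonMangoldt n : ℂ) - 1) * (n : ℂ) ^ (-(σ : ℂ))‖)
      (fun n ↦ (hcont n).aestronglyMeasurable) ?_ ?_ ?_ ?_
    · intro n
      refine Eventually.of_forall fun t ht ↦ ?_
      rw [Set.uIoc_of_le hT.le] at ht
      have h1 : |1 - t / T| ≤ 1 := by
        have h2 : 0 ≤ t / T := div_nonneg ht.1.le hT.le
        have h3 : t / T ≤ 1 := (div_le_one hT).2 ht.2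
        rw [abs_le]; constructor <;> linarith
      have h2 : ‖(n : ℂ) ^ (-((σ : ℂ) + t * Complex.I))‖ = ‖(n : ℂ) ^ (-(σ : ℂ))‖ := by
        rw [Complex.norm_natCast_cpow_of_re_ne_zero, Complex.norm_natCast_cpow_of_re_ne_zero]
        · simp
        · simp; linarith
        · simp; linarith
      have h3 : ‖Complex.exp (t * u * Complex.I)‖ = 1 := by
        have := Complex.norm_exp_ofReal_mul_I (t * u)
        push_cast at this
        exact this
      simp only [hf, norm_mul, h2, h3, Complex.norm_real, Real.norm_eq_abs]
      rw [mul_one]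
      exact mul_le_of_le_one_left (by positivity) h1
    · exact Eventually.of_forall fun t ht ↦ (hF σ (by simpa using hσ)).summable.norm
    · exact intervalIntegrable_const
    · exact Eventually.of_forall fun t ht ↦ (hF _ (by rw [hre]; exact hσ)).mul_left _
  convert! Complex.hasSum_re hsum using 1
  ext n
  have h1 := Complex.reCLM.intervalIntegral_comp_comm (μ := MeasureTheory.volume)
    ((hcont n).intervalIntegrable 0 T)
  simp only [Complex.reCLM_apply] at h1
  rw [← h1, fejer, ← intervalIntegral.integral_const_mul]
  congr 1
  ext t
  rw [hexp, Complex.re_ofReal_mul, Complex.re_ofReal_mul, Complex.exp_ofReal_mul_I_re]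

theorem tendsto_integral_exp_mul_atTop {T : ℝ} (hT : 0 < T) (g : ℝ → ℂ) :
    Tendsto (fun u : ℝ ↦ ∫ t in (0 : ℝ)..T, Complex.exp (t * u * Complex.I) * g t)
      atTop (nhds 0) := by
  have h := Real.tendsto_integral_exp_smul_cocompact ((Set.Ioc 0 T).indicator g)
  have h2 : Tendsto (fun u : ℝ ↦ u * (-(2 * Real.pi)⁻¹)) atTop (cocompact ℝ) := by
    refine Tendsto.mono_right ?_ atBot_le_cocompact
    exact Tendsto.atTop_mul_const_of_neg (by simp; positivity) tendsto_id
  refine (h.comp h2).congr fun u ↦ ?_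
  simp only [Function.comp]
  rw [intervalIntegral.integral_of_le hT.le, ← MeasureTheory.integral_indicator measurableSet_Ioc]
  congr 1
  ext t
  by_cases ht : t ∈ Set.Ioc 0 T
  · simp only [Set.indicator_of_mem ht]
    rw [Circle.smul_def, Real.fourierChar_apply, smul_eq_mul]
    congr 2
    push_cast
    have : (Real.pi : ℂ) ≠ 0 := by exact_mod_cast Real.pi_ne_zero
    field_simp
  · simp [Set.indicator_of_notMem ht]

/-- The smoothed sums of `(Λ n - 1) / n ^ σ` around `exp u` have a limit as `σ → 1`, and this limit
tends to `0` as `u → ∞`, by the Riemann-Lebesgue lemma. -/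
theorem exists_hasSum_mul_fejer_tendsto_zero {T : ℝ} (hT : 0 < T) :
    ∃ E : ℝ → ℝ → ℝ, (∀ σ, 1 < σ → ∀ u,
      HasSum (fun n : ℕ ↦ (ArithmeticFunction.vonMangoldt n - 1) * (n : ℝ) ^ (-σ) *
        fejer T (u - Real.log n)) (E σ u)) ∧
      (∀ u, Tendsto (fun σ ↦ E σ u) (nhdsWithin 1 (Set.Ioi 1)) (nhds (E 1 u))) ∧
      Tendsto (E 1) atTop (nhds 0) := by
  obtain ⟨F, hFc, hF⟩ := exists_continuousOn_hasSum_vonMangoldt_sub_one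
  refine ⟨fun σ u ↦ (∫ t in (0 : ℝ)..T, ((1 - t / T : ℝ) : ℂ) * Complex.exp (t * u * Complex.I) *
        F (σ + t * Complex.I)).re, fun σ hσ u ↦ hasSum_mul_fejer hT hσ hF u, fun u ↦ ?_, ?_⟩
  · have hG : Continuous fun x : ℝ × ℝ ↦ F ((max x.1 1 : ℝ) + x.2 * Complex.I) := by
      refine hFc.comp_continuous (by fun_prop) fun x ↦ ?_
      simp
    have hI : Continuous fun σ : ℝ ↦ (∫ t in (0 : ℝ)..T, ((1 - t / T : ℝ) : ℂ) *
        Complex.exp (t * u * Complex.I) * F ((max σ 1 : ℝ) + t * Complex.I)).re := by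
      refine Complex.continuous_re.comp
        (intervalIntegral.continuous_parametric_intervalIntegral_of_continuous' ?_ 0 T)
      exact Continuous.mul (by fun_prop) hG
    have := (hI.tendsto 1).mono_left (nhdsWithin_le_nhds (s := Set.Ioi 1))
    simp only [max_self] at this
    refine this.congr' ?_
    filter_upwards [self_mem_nhdsWithin] with σ hσ
    rw [max_eq_left (le_of_lt hσ)]
  · have h := tendsto_integral_exp_mul_atTop hT
      (fun t ↦ ((1 - t / T : ℝ) : ℂ) * F ((1 : ℝ) + t * Complex.I))
    have h2 := (Complex.continuous_re.tendsto 0).comp h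
    refine h2.congr fun u ↦ ?_
    simp only [Function.comp]
    congr 2
    ext t
    ring

theorem summable_one_div_one_add_sq_int : Summable fun m : ℤ ↦ 1 / (1 + (m : ℝ) ^ 2) := by
  have h1 : Summable fun m : ℤ ↦ 1 / (m : ℝ) ^ 2 + if m = 0 then 1 else 0 :=
    (Real.summable_one_div_int_pow.2 one_lt_two).add (hasSum_ite_eq 0 1).summable
  refine h1.of_nonneg_of_le (fun m ↦ by positivity) fun m ↦ ?_
  rcases eq_or_ne m 0 with rfl | hm
  · simp
  · have : (0 : ℝ) < (m : ℝ) ^ 2 := by positivity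
    simp only [hm, if_false, add_zero]
    gcongr
    linarith

theorem sum_vonMangoldt_div_le_of_floor_log (N k : ℕ) :
    ∑ n ∈ (Finset.range N).filter (fun n : ℕ ↦ ⌊Real.log n⌋₊ = k), ArithmeticFunction.vonMangoldt n / n ≤
      (Real.log 4 + 4) * Real.exp 1 := by
  have hsub : ∀ n ∈ (Finset.range N).filter (fun n : ℕ ↦ ⌊Real.log n⌋₊ = k), n ≠ 0 →
      Real.exp k ≤ n ∧ (n : ℝ) ≤ Real.exp (k + 1) := by
    intro n hn hn0
    have hpos : (0 : ℝ) < n := by positivity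
    have hk := (Finset.mem_filter.1 hn).2
    have hlog : 0 ≤ Real.log n := Real.log_natCast_nonneg n
    rw [Nat.floor_eq_iff hlog] at hk
    exact ⟨(Real.le_log_iff_exp_le hpos).1 hk.1, ((Real.log_lt_iff_lt_exp hpos).1 hk.2).le⟩
  calc ∑ n ∈ (Finset.range N).filter (fun n : ℕ ↦ ⌊Real.log n⌋₊ = k), ArithmeticFunction.vonMangoldt n / n
      ≤ ∑ n ∈ (Finset.range N).filter (fun n : ℕ ↦ ⌊Real.log n⌋₊ = k),
          Real.exp (-k) * ArithmeticFunction.vonMangoldt n := by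
        refine Finset.sum_le_sum fun n hn ↦ ?_
        rcases eq_or_ne n 0 with rfl | hn0
        · simp
        · rw [div_eq_inv_mul, Real.exp_neg]
          have := (hsub n hn hn0).1
          have h3 : 0 ≤ ArithmeticFunction.vonMangoldt n := ArithmeticFunction.vonMangoldt_nonneg
          gcongr
    _ = Real.exp (-k) * ∑ n ∈ (Finset.range N).filter (fun n : ℕ ↦ ⌊Real.log n⌋₊ = k),
          ArithmeticFunction.vonMangoldt n := by rw [Finset.mul_sum]
    _ ≤ Real.exp (-k) * Chebyshev.psi (Real.exp (k + 1)) := by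
        gcongr
        rw [Chebyshev.psi_eq_sum_Icc]
        refine Finset.sum_le_sum_of_subset_of_nonneg (fun n hn ↦ ?_)
          fun _ _ _ ↦ ArithmeticFunction.vonMangoldt_nonneg
        rcases eq_or_ne n 0 with rfl | hn0
        · simp
        · exact Finset.mem_Icc.2 ⟨Nat.zero_le _, Nat.le_floor (hsub n hn hn0).2⟩
    _ ≤ Real.exp (-k) * ((Real.log 4 + 4) * Real.exp (k + 1)) := by
        gcongr
        exact Chebyshev.psi_le_const_mul_self (Real.exp_pos _).le
    _ = (Real.log 4 + 4) * Real.exp 1 := by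
        rw [Real.exp_add, Real.exp_neg]
        field_simp

theorem exists_sum_vonMangoldt_div_one_add_sq_le :
    ∃ B : ℝ, 0 < B ∧ ∀ (u : ℝ) (N : ℕ),
      ∑ n ∈ Finset.range N,
        ArithmeticFunction.vonMangoldt n / n * (1 / (1 + (u - Real.log n) ^ 2)) ≤ B := by
  set W : ℝ := ∑' m : ℤ, 1 / (1 + (m : ℝ) ^ 2) with hW
  have hWpos : 0 < W :=
    summable_one_div_one_add_sq_int.tsum_pos (fun m ↦ by positivity) 0 (by simp)
  have h4 : 0 < Real.log 4 := Real.log_pos (by norm_num)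
  refine ⟨3 * ((Real.log 4 + 4) * Real.exp 1) * W, by positivity, fun u N ↦ ?_⟩
  set D := (Real.log 4 + 4) * Real.exp 1 with hD
  have hDpos : 0 < D := by positivity
  set κ : ℕ → ℕ := fun n ↦ ⌊Real.log n⌋₊ with hκ
  set S := (Finset.range N).image κ with hS
  rw [← Finset.sum_fiberwise_of_maps_to (t := S) (g := κ)
    (fun n hn ↦ Finset.mem_image_of_mem _ hn)]
  calc _ ≤ ∑ k ∈ S, D * (3 * (1 / (1 + ((((k : ℤ) - ⌊u⌋ : ℤ)) : ℝ) ^ 2))) := by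
        refine Finset.sum_le_sum fun k _ ↦ ?_
        calc _ ≤ ∑ n ∈ Finset.range N with κ n = k, ArithmeticFunction.vonMangoldt n / n *
              (3 * (1 / (1 + ((((k : ℤ) - ⌊u⌋ : ℤ)) : ℝ) ^ 2))) := by
              refine Finset.sum_le_sum fun n hn ↦ ?_
              have h3 : 0 ≤ ArithmeticFunction.vonMangoldt n :=
                ArithmeticFunction.vonMangoldt_nonneg
              refine mul_le_mul_of_nonneg_left ?_ (by positivity)
              have hk := (Finset.mem_filter.1 hn).2
              have hlog : 0 ≤ Real.log n := Real.log_natCast_nonneg n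
              simp only [hκ] at hk
              rw [Nat.floor_eq_iff hlog] at hk
              have hu1 := Int.floor_le u
              have hu2 := Int.lt_floor_add_one u
              push_cast
              rw [mul_one_div, div_le_div_iff₀ (by positivity) (by positivity)]
              set a : ℝ := (⌊u⌋ : ℝ)
              have hd1 : ((k : ℝ) - a) + (u - Real.log n) ≤ 1 := by linarith
              have hd2 : -1 ≤ ((k : ℝ) - a) + (u - Real.log n) := by linarith
              nlinarith [sq_nonneg (((k : ℝ) - a) - (u - Real.log n)),
                mul_nonneg (sub_nonneg.2 hd1) (by linarith [hd2] :
                  0 ≤ ((k : ℝ) - a) + (u - Real.log n) + 1),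
                sq_nonneg ((k : ℝ) - a + 2 * (u - Real.log n))]
          _ ≤ _ := by
              rw [← Finset.sum_mul]
              exact mul_le_mul_of_nonneg_right (sum_vonMangoldt_div_le_of_floor_log N k)
                (by positivity)
    _ = 3 * D * ∑ k ∈ S, 1 / (1 + ((((k : ℤ) - ⌊u⌋ : ℤ)) : ℝ) ^ 2) := by
        rw [Finset.mul_sum]
        exact Finset.sum_congr rfl fun _ _ ↦ by ring
    _ ≤ 3 * D * W := by
        gcongr
        have hinj : Function.Injective fun k : ℕ ↦ (k : ℤ) - ⌊u⌋ := fun a b h ↦ by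
          simpa using h
        rw [← Finset.sum_image (s := S) (g := fun k : ℕ ↦ (k : ℤ) - ⌊u⌋)
          (f := fun m : ℤ ↦ 1 / (1 + (m : ℝ) ^ 2)) (fun a _ b _ h ↦ hinj h)]
        exact summable_one_div_one_add_sq_int.sum_le_tsum _ fun _ _ ↦ by positivity

/-- The Chebyshev function `ψ` grows by a positive proportion of `exp u` on
`[exp (u - ε), exp (u + ε)]`. -/
theorem exists_mul_exp_le_psi_sub_psi {ε : ℝ} (hε : 0 < ε) :
    ∃ c : ℝ, 0 < c ∧ ∀ᶠ u : ℝ in atTop,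
      c * Real.exp u ≤ Chebyshev.psi (Real.exp (u + ε)) - Chebyshev.psi (Real.exp (u - ε)) := by
  obtain ⟨B, hB, hBle⟩ := exists_sum_vonMangoldt_div_one_add_sq_le
  set q : ℝ := 1 + 1 / ε ^ 2 with hq
  have hqpos : 0 < q := by positivity
  set T : ℝ := 64 * q * B + 1 with hTdef
  have hT1 : 1 ≤ T := by rw [hTdef]; linarith [mul_pos (mul_pos (by norm_num : (0 : ℝ) < 64) hqpos) hB]
  have hT : 0 < T := by linarith
  have hfar : 2 * q / T * B ≤ 1 / 32 := by
    rw [div_mul_eq_mul_div, div_le_div_iff₀ hT (by norm_num)]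
    rw [hTdef]
    linarith
  obtain ⟨E, hEsum, hElim, hE0⟩ := exists_hasSum_mul_fejer_tendsto_zero hT
  refine ⟨1 / (64 * T) * Real.exp (-ε), by positivity, ?_⟩
  filter_upwards [hE0.eventually (lt_mem_nhds (show -(1 / 64 : ℝ) < 0 by norm_num)),
    (Real.tendsto_exp_neg_atTop_nhds_zero).eventually
      (gt_mem_nhds (show (0 : ℝ) < 1 / (4 * T) by positivity))] with u hu1 hu2
  set near := Finset.Ioc ⌊Real.exp (u - ε)⌋₊ ⌊Real.exp (u + ε)⌋₊ with hnear
  set S := Finset.Ioc ⌊Real.exp u⌋₊ ⌊Real.exp (u + 1 / T)⌋₊ with hS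
  have hΛ : ∀ n, 0 ≤ ArithmeticFunction.vonMangoldt n :=
    fun n ↦ ArithmeticFunction.vonMangoldt_nonneg
  set Q : ℝ := ∑ n ∈ near, ArithmeticFunction.vonMangoldt n / n with hQ
  have hupper : ∀ σ : ℝ, 1 < σ → ∀ N : ℕ, near ⊆ Finset.range N →
      ∑ n ∈ Finset.range N, ArithmeticFunction.vonMangoldt n * (n : ℝ) ^ (-σ) *
        fejer T (u - Real.log n) ≤ T * Q + 1 / 32 := by
    intro σ hσ N hN
    have hpt : ∀ n ∈ Finset.range N, ArithmeticFunction.vonMangoldt n * (n : ℝ) ^ (-σ) *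
        fejer T (u - Real.log n) ≤
        (if n ∈ near then T * (ArithmeticFunction.vonMangoldt n / n) else 0) +
        2 * q / T * (ArithmeticFunction.vonMangoldt n / n * (1 / (1 + (u - Real.log n) ^ 2))) := by
      intro n _
      rcases eq_or_ne n 0 with rfl | hn0
      · simp
      have hn : (0 : ℝ) < n := by positivity
      have hn1 : (1 : ℝ) ≤ n := by exact_mod_cast Nat.one_le_iff_ne_zero.2 hn0
      have hpow : (n : ℝ) ^ (-σ) ≤ 1 / n := by
        rw [one_div, ← Real.rpow_neg_one]
        exact Real.rpow_le_rpow_of_exponent_le hn1 (by linarith)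
      have hle : ArithmeticFunction.vonMangoldt n * (n : ℝ) ^ (-σ) * fejer T (u - Real.log n) ≤
          ArithmeticFunction.vonMangoldt n / n * fejer T (u - Real.log n) := by
        rw [div_eq_mul_one_div]
        have := fejer_nonneg hT (u - Real.log n)
        have := hΛ n
        gcongr
      refine hle.trans ?_
      have hΛn : 0 ≤ ArithmeticFunction.vonMangoldt n / n := div_nonneg (hΛ n) hn.le
      by_cases hmem : n ∈ near
      · rw [if_pos hmem, mul_comm T]
        have h1 := mul_le_mul_of_nonneg_left (fejer_le_self hT (u - Real.log n)) hΛn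
        have : 0 ≤ 2 * q / T *
          (ArithmeticFunction.vonMangoldt n / n * (1 / (1 + (u - Real.log n) ^ 2))) := by
          have := hΛ n
          positivity
        linarith
      · rw [if_neg hmem, zero_add]
        have hdist : ε ^ 2 ≤ (u - Real.log n) ^ 2 := by
          rw [hnear, Finset.mem_Ioc, not_and_or] at hmem
          rcases hmem with h | h
          · rw [not_lt, Nat.le_floor_iff (Real.exp_pos _).le] at h
            have := (Real.log_le_iff_le_exp hn).2 h
            nlinarith
          · rw [not_le, Nat.floor_lt (Real.exp_pos _).le] at h
            have := (Real.lt_log_iff_exp_lt hn).2 h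
            nlinarith
        set v := u - Real.log n
        have hε2 : 0 < ε ^ 2 := by positivity
        have hv2 : 0 < v ^ 2 := by linarith
        have hv : v ≠ 0 := by rintro h; simp [h] at hv2
        calc _ ≤ ArithmeticFunction.vonMangoldt n / n * (2 * q / T * (1 / (1 + v ^ 2))) := by
              refine mul_le_mul_of_nonneg_left ((fejer_le hT hv).trans ?_) hΛn
              rw [div_mul_div_comm, mul_one, div_le_div_iff₀ (by positivity) (by positivity)]
              have : 1 ≤ 1 / ε ^ 2 * v ^ 2 := by
                rw [one_div, inv_mul_eq_div, one_le_div hε2]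
                exact hdist
              have h3 : 1 + v ^ 2 ≤ q * v ^ 2 := by rw [hq]; linarith
              nlinarith
          _ = _ := by ring
    refine (Finset.sum_le_sum hpt).trans ?_
    rw [Finset.sum_add_distrib, ← Finset.mul_sum, Finset.sum_ite_mem,
      Finset.inter_eq_right.2 hN, ← Finset.mul_sum]
    have := mul_le_mul_of_nonneg_left (hBle u N) (show 0 ≤ 2 * q / T by positivity)
    linarith
  have hlower : ∀ σ : ℝ, 1 < σ → ∀ N : ℕ, S ⊆ Finset.range N →
      T / 4 * ∑ n ∈ S, (n : ℝ) ^ (-σ) ≤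
      ∑ n ∈ Finset.range N, (n : ℝ) ^ (-σ) * fejer T (u - Real.log n) := by
    intro σ hσ N hN
    rw [Finset.mul_sum]
    refine (Finset.sum_le_sum fun n hn ↦ ?_).trans
      (Finset.sum_le_sum_of_subset_of_nonneg hN fun n _ _ ↦
        mul_nonneg (by positivity) (fejer_nonneg hT _))
    rw [mul_comm]
    refine mul_le_mul_of_nonneg_left (le_fejer hT ?_) (by positivity)
    rw [hS, Finset.mem_Ioc, Nat.floor_lt (Real.exp_pos _).le,
      Nat.le_floor_iff (Real.exp_pos _).le] at hn
    have hnpos : (0 : ℝ) < n := (Real.exp_pos _).trans hn.1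
    have h1 := (Real.lt_log_iff_exp_lt hnpos).2 hn.1
    have h2 := (Real.log_le_iff_le_exp hnpos).2 hn.2
    rw [abs_le]
    constructor <;> linarith
  have hEle : ∀ σ : ℝ, 1 < σ → E σ u ≤ T * Q + 1 / 32 - T / 4 * ∑ n ∈ S, (n : ℝ) ^ (-σ) := by
    intro σ hσ
    refine le_of_tendsto (hEsum σ hσ u).tendsto_sum_nat ?_
    obtain ⟨N₀, hN₀⟩ := (near ∪ S).exists_nat_subset_range
    filter_upwards [eventually_ge_atTop N₀] with N hN
    have hsub : near ∪ S ⊆ Finset.range N := hN₀.trans (Finset.range_mono hN)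
    have h1 := hupper σ hσ N (Finset.union_subset_left hsub)
    have h2 := hlower σ hσ N (Finset.union_subset_right hsub)
    simp only [sub_mul, one_mul, Finset.sum_sub_distrib]
    linarith
  have hSsum : 1 / (4 * T) ≤ ∑ n ∈ S, (n : ℝ) ^ (-1 : ℝ) := by
    set w := u + 1 / T with hw
    have hx : Real.exp w = Real.exp u * Real.exp (1 / T) := by rw [hw, Real.exp_add]
    have hcard : Real.exp w - 1 - Real.exp u ≤ (S.card : ℝ) := by
      rw [hS, Nat.card_Ioc]
      have h1 := Nat.lt_floor_add_one (Real.exp w)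
      have h2 := Nat.floor_le (Real.exp_pos u).le
      have h3 : ((⌊Real.exp w⌋₊ : ℕ) : ℝ) ≤
          ((⌊Real.exp w⌋₊ - ⌊Real.exp u⌋₊ : ℕ) : ℝ) + (⌊Real.exp u⌋₊ : ℕ) := by
        exact_mod_cast le_tsub_add
      linarith
    calc 1 / (4 * T) ≤ (Real.exp w - 1 - Real.exp u) * Real.exp (-w) := by
          have h1 : (Real.exp w - 1 - Real.exp u) * Real.exp (-w) =
              1 - Real.exp (-(1 / T)) - Real.exp (-u) * Real.exp (-(1 / T)) := by
            have e1 : Real.exp w * Real.exp (-w) = 1 := by rw [← Real.exp_add]; simp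
            have e2 : Real.exp u * Real.exp (-w) = Real.exp (-(1 / T)) := by
              rw [← Real.exp_add, hw]; ring_nf
            have e3 : Real.exp (-w) = Real.exp (-u) * Real.exp (-(1 / T)) := by
              rw [← Real.exp_add, hw]; ring_nf
            rw [sub_mul, sub_mul, e1, e2, one_mul, e3]
            ring
          have hTi : 0 < 1 / T := by positivity
          have hTi1 : 1 / T ≤ 1 := by rw [div_le_one hT]; exact hT1
          have h2 : Real.exp (-(1 / T)) ≤ 1 - 1 / T / 2 := by
            have h3 := Real.add_one_le_exp (1 / T)
            rw [Real.exp_neg, inv_le_comm₀ (Real.exp_pos _) (by linarith)]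
            refine le_trans ?_ h3
            rw [inv_le_iff_one_le_mul₀ (by linarith)]
            nlinarith
          have h4 : Real.exp (-(1 / T)) ≤ 1 := Real.exp_le_one_iff.2 (by linarith)
          have h5 : Real.exp (-u) * Real.exp (-(1 / T)) ≤ Real.exp (-u) :=
            mul_le_of_le_one_right (Real.exp_pos _).le h4
          have h6 : 1 / (4 * T) = 1 / T / 4 := by field_simp
          rw [h1]
          rw [h6] at hu2 ⊢
          linarith
      _ ≤ S.card * Real.exp (-w) := by gcongr
      _ = ∑ n ∈ S, Real.exp (-w) := by simp
      _ ≤ _ := by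
          refine Finset.sum_le_sum fun n hn ↦ ?_
          rw [hS, Finset.mem_Ioc, Nat.floor_lt (Real.exp_pos _).le,
            Nat.le_floor_iff (Real.exp_pos _).le] at hn
          have hnpos : (0 : ℝ) < n := (Real.exp_pos _).trans hn.1
          rw [Real.exp_neg, Real.rpow_neg_one]
          exact inv_anti₀ hnpos hn.2
  have hE1 : E 1 u ≤ T * Q + 1 / 32 - T / 4 * ∑ n ∈ S, (n : ℝ) ^ (-1 : ℝ) := by
    refine le_of_tendsto_of_tendsto (hElim u) (b := nhdsWithin 1 (Set.Ioi 1))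
      (g := fun σ ↦ T * Q + 1 / 32 - T / 4 * ∑ n ∈ S, (n : ℝ) ^ (-σ)) ?_ ?_
    · refine Tendsto.mono_left ?_ nhdsWithin_le_nhds
      refine tendsto_const_nhds.sub (tendsto_const_nhds.mul (tendsto_finsetSum _ fun n hn ↦ ?_))
      have hn0 : (n : ℝ) ≠ 0 := by
        rw [hS, Finset.mem_Ioc] at hn
        exact_mod_cast (by omega : n ≠ 0)
      exact (Real.continuous_const_rpow hn0).continuousAt.tendsto.comp (tendsto_id.neg)
    · filter_upwards [self_mem_nhdsWithin] with σ hσ using hEle σ hσ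
  have hQlow : 1 / (64 * T) ≤ Q := by
    have h1 := mul_le_mul_of_nonneg_left hSsum (show 0 ≤ T / 4 by positivity)
    have h2 : T / 4 * (1 / (4 * T)) = 1 / 16 := by field_simp; norm_num
    rw [div_le_iff₀ (by positivity)]
    linarith
  have hQup : Q ≤ Real.exp (-(u - ε)) *
      (Chebyshev.psi (Real.exp (u + ε)) - Chebyshev.psi (Real.exp (u - ε))) := by
    have hfl : ⌊Real.exp (u - ε)⌋₊ ≤ ⌊Real.exp (u + ε)⌋₊ :=
      Nat.floor_mono (Real.exp_le_exp.2 (by linarith))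
    have hdiff : Chebyshev.psi (Real.exp (u + ε)) - Chebyshev.psi (Real.exp (u - ε)) =
        ∑ n ∈ near, ArithmeticFunction.vonMangoldt n := by
      rw [Chebyshev.psi, Chebyshev.psi, sub_eq_iff_eq_add', hnear,
        Finset.sum_Ioc_consecutive _ (Nat.zero_le _) hfl]
    rw [hdiff, Finset.mul_sum]
    refine Finset.sum_le_sum fun n hn ↦ ?_
    rw [hnear, Finset.mem_Ioc, Nat.floor_lt (Real.exp_pos _).le] at hn
    rw [div_eq_inv_mul, Real.exp_neg]
    have := hΛ n
    have := hn.1.le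
    gcongr
  calc 1 / (64 * T) * Real.exp (-ε) * Real.exp u
      = 1 / (64 * T) * Real.exp (u - ε) := by rw [mul_assoc, ← Real.exp_add]; ring_nf
    _ ≤ Real.exp (-(u - ε)) * (Chebyshev.psi (Real.exp (u + ε)) -
          Chebyshev.psi (Real.exp (u - ε))) * Real.exp (u - ε) := by
        gcongr
        exact hQlow.trans hQup
    _ = _ := by
        rw [mul_comm, ← mul_assoc, ← Real.exp_add]
        simp

theorem theta_sub_theta_le {N M : ℕ} (hN : 1 ≤ N) (h : N ≤ M) :
    Chebyshev.theta M - Chebyshev.theta N ≤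
      ((Nat.primeCounting M : ℝ) - Nat.primeCounting N) * Real.log M := by
  induction M, h using Nat.le_induction with
  | base => simp
  | succ M h ih =>
    have hlog : Real.log M ≤ Real.log (M + 1 : ℕ) := by
      have : (0 : ℝ) < M := by exact_mod_cast (by omega : 0 < M)
      gcongr
      omega
    have hmono : (Nat.primeCounting N : ℝ) ≤ Nat.primeCounting M := by
      exact_mod_cast Nat.monotone_primeCounting h
    have hstep := mul_le_mul_of_nonneg_left hlog (sub_nonneg.2 hmono)
    have hπ : Nat.primeCounting (M + 1) = Nat.primeCounting M +
        if (M + 1).Prime then 1 else 0 := Nat.count_succ ..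
    have hθ : Chebyshev.theta (M + 1 : ℕ) = Chebyshev.theta M +
        if (M + 1).Prime then Real.log (M + 1 : ℕ) else 0 := by
      simp only [Chebyshev.theta, Nat.floor_natCast, Finset.sum_filter]
      rw [Finset.sum_Ioc_succ_top (Nat.zero_le _)]
    rw [hπ, hθ]
    split_ifs
    · push_cast at *
      linarith
    · push_cast at *
      linarith

/-- A weak form of the prime number theorem: intervals `[N, l * N]` contain a positive proportion
of primes. -/
theorem exists_one_add_mul_primeCounting_le {l : ℝ} (hl : 1 < l) :
    ∃ δ : ℝ, 0 < δ ∧ ∀ᶠ N : ℕ in atTop, ∀ M : ℕ, l * N ≤ M →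
      (1 + δ) * Nat.primeCounting N ≤ Nat.primeCounting M := by
  have hlpos : 0 < l := by linarith
  have hloglpos : 0 < Real.log l := Real.log_pos hl
  obtain ⟨c, hc, hpsi⟩ := exists_mul_exp_le_psi_sub_psi (half_pos hloglpos)
  obtain ⟨C, hC⟩ := Chebyshev.psi_sub_theta_le_mul_sqrt
  have h4 : 0 < Real.log 4 := Real.log_pos (by norm_num)
  set D : ℝ := Real.log 4 + 1 with hD
  have hDpos : 0 < D := by positivity
  refine ⟨c / (4 * D), by positivity, ?_⟩
  have hcast : Tendsto (fun N : ℕ ↦ (N : ℝ)) atTop atTop := tendsto_natCast_atTop_atTop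
  have hu : Tendsto (fun N : ℕ ↦ Real.log N + Real.log l / 2) atTop atTop :=
    tendsto_atTop_add_const_right _ _ (Real.tendsto_log_atTop.comp hcast)
  have hsqrt : ∀ᶠ N : ℕ in atTop, 2 * |C| * √l / c ≤ √(N : ℝ) :=
    (Real.tendsto_sqrt_atTop.comp hcast).eventually_ge_atTop _
  filter_upwards [hu.eventually hpsi, hsqrt, eventually_ge_atTop 2,
    hcast.eventually (Chebyshev.eventually_primeCounting_le one_pos),
    hcast.eventually_ge_atTop l] with N h1 h2 hN2 h3 hNl M hM
  have hN2' : (2 : ℝ) ≤ N := by exact_mod_cast hN2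
  have hNpos : (0 : ℝ) < N := by linarith
  have hlogN : 0 < Real.log N := Real.log_pos (by linarith)
  rw [Nat.floor_natCast] at h3
  have e1 : Real.exp (Real.log N + Real.log l / 2 + Real.log l / 2) = l * N := by
    rw [add_assoc, add_halves, Real.exp_add, Real.exp_log hNpos, Real.exp_log hlpos, mul_comm]
  have e2 : Real.exp (Real.log N + Real.log l / 2 - Real.log l / 2) = N := by
    rw [add_sub_cancel_right, Real.exp_log hNpos]
  have e3 : (N : ℝ) ≤ Real.exp (Real.log N + Real.log l / 2) := by
    rw [Real.exp_add, Real.exp_log hNpos]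
    exact le_mul_of_one_le_right hNpos.le (Real.one_le_exp (by linarith))
  rw [e1, e2] at h1
  have hpsi' : c * N ≤ Chebyshev.psi (l * N) - Chebyshev.psi N :=
    (mul_le_mul_of_nonneg_left e3 hc.le).trans h1
  have herr : C * √(l * N) ≤ c / 2 * N := by
    rw [Real.sqrt_mul hlpos.le]
    rw [div_le_iff₀ hc] at h2
    have hs := Real.sq_sqrt hNpos.le
    have h5 : C * (√l * √(N : ℝ)) ≤ |C| * (√l * √(N : ℝ)) := by
      gcongr
      exact le_abs_self C
    nlinarith [mul_le_mul_of_nonneg_right h2 (Real.sqrt_nonneg (N : ℝ))]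
  set K : ℕ := ⌊l * N⌋₊ with hK
  have hNK : N ≤ K := Nat.le_floor (by nlinarith)
  have htheta : c / 2 * N ≤ Chebyshev.theta K - Chebyshev.theta N := by
    have h6 := hC (l * N)
    have h7 := Chebyshev.theta_le_psi N
    rw [hK, ← Chebyshev.theta_eq_theta_coe_floor]
    linarith
  have hlogK : Real.log K ≤ 2 * Real.log N := by
    have h8 : (K : ℝ) ≤ N * N :=
      (Nat.floor_le (by positivity)).trans (mul_le_mul_of_nonneg_right hNl hNpos.le)
    have hKpos : (0 : ℝ) < K := by exact_mod_cast (by omega : 0 < K)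
    calc Real.log K ≤ Real.log (N * N) := Real.log_le_log hKpos h8
      _ = 2 * Real.log N := by rw [Real.log_mul hNpos.ne' hNpos.ne']; ring
  have hmono : (Nat.primeCounting N : ℝ) ≤ Nat.primeCounting K := by
    exact_mod_cast Nat.monotone_primeCounting hNK
  have hKM : (Nat.primeCounting K : ℝ) ≤ Nat.primeCounting M := by
    exact_mod_cast Nat.monotone_primeCounting (Nat.floor_le_of_le hM)
  have h9 : c / 2 * N ≤
      ((Nat.primeCounting K : ℝ) - Nat.primeCounting N) * (2 * Real.log N) :=
    (htheta.trans (theta_sub_theta_le (by omega) hNK)).trans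
      (mul_le_mul_of_nonneg_left hlogK (sub_nonneg.2 hmono))
  have h10 : c / (4 * D) * Nat.primeCounting N ≤
      (Nat.primeCounting K : ℝ) - Nat.primeCounting N := by
    calc c / (4 * D) * Nat.primeCounting N ≤ c / (4 * D) * (D * N / Real.log N) := by gcongr
      _ = c / 2 * N / (2 * Real.log N) := by field_simp; norm_num
      _ ≤ _ := by rwa [div_le_iff₀ (by positivity)]
  linarith

theorem eventually_lt_mul_of_ncard_eq {A : Set ℕ} {θ : ℝ} (hθ : 0 < θ)
    (hdens : Tendsto
      (fun N : ℕ => ((A ∩ Set.Icc 1 N).ncard : ℝ) /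
        (({p : ℕ | Nat.Prime p} ∩ Set.Icc 1 N).ncard : ℝ))
      atTop (nhds θ)) {l : ℝ} (hl : 1 < l) :
    ∀ᶠ N : ℕ in atTop, ∀ M : ℕ, N ≤ M →
      (A ∩ Set.Icc 1 M).ncard = (A ∩ Set.Icc 1 N).ncard → (M : ℝ) < l * N := by
  have hcount : ∀ N : ℕ, ({p : ℕ | Nat.Prime p} ∩ Set.Icc 1 N).ncard = Nat.primeCounting N := by
    intro N
    rw [← Nat.primesLE_card_eq_primeCounting, ← Set.ncard_coe_finset]
    congr 1
    ext q
    simp only [Set.mem_inter_iff, Set.mem_Icc, Finset.mem_coe, Nat.mem_primesLE]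
    exact ⟨fun h ↦ ⟨h.2.2, h.1⟩, fun h ↦ ⟨h.2, h.2.one_le, h.1⟩⟩
  simp only [hcount] at hdens
  obtain ⟨δ, hδ, hev⟩ := exists_one_add_mul_primeCounting_le hl
  have hlow : θ * (1 + δ / 2) / (1 + δ) < θ := by
    rw [div_lt_iff₀ (by positivity)]
    nlinarith
  have hup : θ < θ * (1 + δ / 2) := by nlinarith
  have h1 := (hdens.eventually (lt_mem_nhds hlow)).and (hdens.eventually (gt_mem_nhds hup))
  filter_upwards [hev, eventually_forall_ge_atTop.2 h1, eventually_ge_atTop 2]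
    with N hN hr hN2 M hNM hcard
  by_contra! hM
  have h2 := hN M hM
  have h3 := (hr M hNM).1
  have h4 := (hr N le_rfl).2
  have hπ : (0 : ℝ) < Nat.primeCounting N := by
    rw [Nat.cast_pos, Nat.pos_iff_ne_zero, Ne, Nat.primeCounting_eq_zero_iff]
    omega
  have hπM : (0 : ℝ) < Nat.primeCounting M := by
    exact lt_of_lt_of_le (by positivity) h2
  rw [hcard] at h3
  rw [div_lt_div_iff₀ (by positivity) hπM] at h3
  rw [div_lt_iff₀ hπ] at h4
  have h5 : θ * (1 + δ / 2) * ((1 + δ) * Nat.primeCounting N) ≤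
    θ * (1 + δ / 2) * Nat.primeCounting M := by gcongr
  nlinarith

theorem sum_Ioc_one_div_le_log {P M : ℕ} (hP : 1 ≤ P) (h : P ≤ M) :
    ∑ n ∈ Finset.Ioc P M, (1 : ℝ) / n ≤ Real.log (M / P) := by
  have hP' : (0 : ℝ) < P := by exact_mod_cast hP
  induction M, h using Nat.le_induction with
  | base => simp [hP'.ne']
  | succ M h ih =>
    have hM : (0 : ℝ) < M := by exact_mod_cast (by omega : 0 < M)
    rw [Finset.sum_Ioc_succ_top h]
    have h1 := Real.one_sub_inv_le_log_of_pos (show 0 < ((M + 1 : ℕ) : ℝ) / M by positivity)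
    rw [Real.log_div (by positivity) hM.ne'] at h1
    rw [Real.log_div hM.ne' hP'.ne'] at ih
    rw [Real.log_div (by positivity) hP'.ne']
    have h2 : 1 - (((M + 1 : ℕ) : ℝ) / M)⁻¹ = 1 / ((M + 1 : ℕ) : ℝ) := by
      push_cast
      field_simp
      ring
    linarith

end PrimeGaps

/-- If `A` is an infinite set of primes with natural density `θ ∈ (0,1]` within the primes,
enumerated in increasing order as `p 1 < p 2 < ⋯`, and for `M ≥ p 1` the index
`Nplus M = max {n : p n ≤ M}`, then the tail sum
`H M = ∑_{p (Nplus M) < n ≤ M, all prime factors of n in A} 1/n` satisfies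
`H M ≤ log (p (Nplus M + 1) / p (Nplus M))` and `H M → 0` as `M → ∞`. -/
theorem tail_harmonic_sum_small
    (A : Set ℕ) (hA : ∀ p ∈ A, Nat.Prime p) (hAinf : A.Infinite)
    (θ : ℝ) (hθ : θ ∈ Set.Ioc (0 : ℝ) 1)
    (hdens : Tendsto
      (fun N : ℕ => ((A ∩ Set.Icc 1 N).ncard : ℝ) / (({p : ℕ | Nat.Prime p} ∩ Set.Icc 1 N).ncard : ℝ))
      atTop (nhds θ))
    (p : ℕ → ℕ)
    (hmono : StrictMonoOn p {j : ℕ | 1 ≤ j})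
    (hmem : ∀ j : ℕ, 1 ≤ j → p j ∈ A)
    (hsurj : ∀ q ∈ A, ∃ j : ℕ, 1 ≤ j ∧ p j = q)
    (Nplus : ℕ → ℕ)
    (hNplus : ∀ M : ℕ, p 1 ≤ M →
      1 ≤ Nplus M ∧ p (Nplus M) ≤ M ∧ ∀ n : ℕ, 1 ≤ n → p n ≤ M → n ≤ Nplus M)
    (H : ℕ → ℝ)
    (hH : ∀ M : ℕ, H M =
      ∑ n ∈ Finset.Ioc (p (Nplus M)) M,
        if ∀ q : ℕ, q.Prime → q ∣ n → q ∈ A then (1 : ℝ) / (n : ℝ) else 0) :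
    (∀ M : ℕ, p 1 ≤ M →
      H M ≤ Real.log ((p (Nplus M + 1) : ℝ) / (p (Nplus M) : ℝ)))
    ∧ Tendsto H atTop (nhds 0) := by
  have hp1 : 1 ≤ p 1 := (hA _ (hmem 1 le_rfl)).one_le
  have hPpos : ∀ M, p 1 ≤ M → 1 ≤ p (Nplus M) := fun M hM ↦
    (hA _ (hmem _ (hNplus M hM).1)).one_le
  have hmax : ∀ M, p 1 ≤ M → ∀ q ∈ A, q ≤ M → q ≤ p (Nplus M) := by
    intro M hM q hq hqM
    obtain ⟨j, hj, rfl⟩ := hsurj q hq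
    exact hmono.monotoneOn hj (hNplus M hM).1 ((hNplus M hM).2.2 j hj hqM)
  have hlog : ∀ M, p 1 ≤ M → H M ≤ Real.log ((M : ℝ) / p (Nplus M)) := by
    intro M hM
    rw [hH]
    refine (Finset.sum_le_sum fun n _ ↦ ?_).trans
      (PrimeGaps.sum_Ioc_one_div_le_log (hPpos M hM) (hNplus M hM).2.1)
    split_ifs
    · exact le_rfl
    · positivity
  refine ⟨fun M hM ↦ (hlog M hM).trans ?_, ?_⟩
  · have h1 : M ≤ p (Nplus M + 1) := by
      by_contra! h
      have := (hNplus M hM).2.2 (Nplus M + 1) (by omega) h.le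
      omega
    have h2 : (0 : ℝ) < p (Nplus M) := by exact_mod_cast hPpos M hM
    have h3 : (0 : ℝ) < M := by exact_mod_cast hp1.trans hM
    gcongr
  · have hPtend : Tendsto (fun M ↦ p (Nplus M)) atTop atTop := by
      rw [tendsto_atTop]
      intro K
      obtain ⟨q, hq, hKq⟩ := hAinf.exists_gt K
      filter_upwards [eventually_ge_atTop (p 1), eventually_ge_atTop q] with M hM hqM
      exact hKq.le.trans (hmax M hM q hq hqM)
    have hH0 : ∀ M, 0 ≤ H M := by
      intro M
      rw [hH]
      refine Finset.sum_nonneg fun n _ ↦ ?_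
      split_ifs <;> positivity
    rw [Metric.tendsto_atTop']
    intro ε hε
    have hev := hPtend.eventually
      (PrimeGaps.eventually_lt_mul_of_ncard_eq hθ.1 hdens (Real.one_lt_exp_iff.2 hε))
    obtain ⟨M₀, hM₀⟩ := eventually_atTop.1 (hev.and (eventually_ge_atTop (p 1)))
    refine ⟨M₀, fun M hM ↦ ?_⟩
    obtain ⟨h1, hM1⟩ := hM₀ M hM.le
    have hset : A ∩ Set.Icc 1 M = A ∩ Set.Icc 1 (p (Nplus M)) := by
      ext q
      simp only [Set.mem_inter_iff, Set.mem_Icc]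
      exact ⟨fun h ↦ ⟨h.1, h.2.1, hmax M hM1 q h.1 h.2.2⟩,
        fun h ↦ ⟨h.1, h.2.1, h.2.2.trans (hNplus M hM1).2.1⟩⟩
    have h2 := h1 M (hNplus M hM1).2.1 (by rw [hset])
    have hP : (0 : ℝ) < p (Nplus M) := by exact_mod_cast hPpos M hM1
    have hMpos : (0 : ℝ) < M := by exact_mod_cast hp1.trans hM1
    rw [Real.dist_eq, sub_zero, abs_of_nonneg (hH0 M)]
    refine (hlog M hM1).trans_lt ?_
    rw [Real.log_lt_iff_lt_exp (by positivity), div_lt_iff₀ hP]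
    exact h2
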